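/- Let E be a real inner product space with unit sphere S, let V ⊆ E be a linear subspace, and let u, v ∈ S with u ≠ v and v ≠ -u. If the geodesic segment [u,v] contains two distinct points w₁ ≠ w₂ that both lie in V, then u ∈ V and v ∈ V, and hence [u,v] ⊆ V. (A geodesic meeting the span of a simplex in more than two points lies in that span.) -/

import Mathlib

/-!
A point of the geodesic segment `[u, v]` is a nonzero multiple of the point `s • u + t • v` of the
chord joining `u` to `v`: the chord avoids the origin because `u` and `v` are not antipodal. So two
distinct points of `[u, v]` in `V` give two distinct points of the chord in `V`. Their difference is
a nonzero multiple of `v - u`, so `V` contains the line through `u` and `v`.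
-/

open RealInnerProductSpace

/-- The unit sphere of `E`. -/
def unitSphere (E : Type*) [NormedAddCommGroup E] : Set E := {x : E | ‖x‖ = 1}

/-- The geodesic segment from `u` to `v` on the unit sphere (for `v ≠ -u`). -/
def geoSeg {E : Type*} [NormedAddCommGroup E] [InnerProductSpace ℝ E] (u v : E) : Set E :=
  {w : E | ∃ s t : ℝ, 0 ≤ s ∧ 0 ≤ t ∧ s + t = 1 ∧ w = ‖s • u + t • v‖⁻¹ • (s • u + t • v)}

/-- A subset of the unit sphere is spherically convex if it contains the geodesic
segment between any two of its non-antipodal points. -/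
def SphConvex {E : Type*} [NormedAddCommGroup E] [InnerProductSpace ℝ E] (A : Set E) : Prop :=
  ∀ u ∈ A, ∀ v ∈ A, v ≠ -u → geoSeg u v ⊆ A

theorem chord_ne_zero {E : Type*} [NormedAddCommGroup E] [InnerProductSpace ℝ E]
    {u v : E} (hu : ‖u‖ = 1) (hv : ‖v‖ = 1) (hne : v ≠ -u)
    {s t : ℝ} (hs : 0 ≤ s) (ht : 0 ≤ t) (hst : s + t = 1) : s • u + t • v ≠ 0 := by
  intro h
  -- Taking norms in `s • u = -(t • v)` forces `s = t = 1 / 2`.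
  have hnorm : ‖s • u‖ = ‖t • v‖ := by rw [eq_neg_of_add_eq_zero_left h, norm_neg]
  rw [norm_smul, norm_smul, hu, hv, mul_one, mul_one, Real.norm_of_nonneg hs,
    Real.norm_of_nonneg ht] at hnorm
  have ht0 : t ≠ 0 := by intro h0; linarith
  rw [hnorm, ← smul_add, smul_eq_zero] at h
  exact hne (eq_neg_of_add_eq_zero_right (h.resolve_left ht0))

theorem geoSeg_subset_of_two_points_in_subspace
    {E : Type*} [NormedAddCommGroup E] [InnerProductSpace ℝ E]
    (V : Submodule ℝ E)
    (u v : E) (hu : u ∈ unitSphere E) (hv : v ∈ unitSphere E)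
    (huv : u ≠ v) (hne : v ≠ -u)
    (w₁ w₂ : E) (hw₁ : w₁ ∈ geoSeg u v) (hw₂ : w₂ ∈ geoSeg u v) (hww : w₁ ≠ w₂)
    (hw₁V : w₁ ∈ V) (hw₂V : w₂ ∈ V) :
    u ∈ V ∧ v ∈ V ∧ geoSeg u v ⊆ (V : Set E) := by
  obtain ⟨s₁, t₁, hs₁, ht₁, hst₁, rfl⟩ := hw₁
  obtain ⟨s₂, t₂, hs₂, ht₂, hst₂, rfl⟩ := hw₂
  have h₁ := chord_ne_zero hu hv hne hs₁ ht₁ hst₁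
  have h₂ := chord_ne_zero hu hv hne hs₂ ht₂ hst₂
  rw [V.smul_mem_iff (inv_ne_zero (norm_ne_zero_iff.mpr h₁))] at hw₁V
  rw [V.smul_mem_iff (inv_ne_zero (norm_ne_zero_iff.mpr h₂))] at hw₂V
  obtain rfl : s₁ = 1 - t₁ := by linarith
  obtain rfl : s₂ = 1 - t₂ := by linarith
  have ht : t₁ - t₂ ≠ 0 := by
    intro h
    obtain rfl : t₁ = t₂ := by linarith
    exact hww rfl
  have hd : v - u ∈ V := by
    rw [← V.smul_mem_iff ht]
    convert V.sub_mem hw₁V hw₂V using 1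
    module
  have huV : u ∈ V := by
    convert V.sub_mem hw₁V (V.smul_mem t₁ hd) using 1
    module
  have hvV : v ∈ V := by simpa using V.add_mem hd huV
  refine ⟨huV, hvV, ?_⟩
  rintro _ ⟨s, t, -, -, -, rfl⟩
  exact V.smul_mem _ (V.add_mem (V.smul_mem _ huV) (V.smul_mem _ hvV))
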